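/- Let A be a ring such that both A and its opposite ring A^op are Noetherian. If A has finite left global dimension then A^op has finite left global dimension (equivalently, A has finite right global dimension, and the two are equal). -/

import Mathlib

open CategoryTheory

universe u

/-- `M` has projective dimension at most `n`. -/
def HasProjDimLE (A : Type u) [Ring A] (M : ModuleCat.{u} A) (n : ℕ) : Prop :=
  ∃ P : ProjectiveResolution M, ∀ i, n < i → Limits.IsZero (P.complex.X i)

/-- `A` has finite (left) global dimension. -/
def HasFiniteGlobalDim (A : Type u) [Ring A] : Prop :=
  ∃ n : ℕ, ∀ M : ModuleCat.{u} A, HasProjDimLE A M n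

/-!
Write `L* = Hom(L, A)`, a right `A`-module for every left `A`-module `L`. A cyclic right module is
the cokernel of a map `f* : M* → A*` with `M` free of finite rank. Since `A` is right Noetherian,
`f` starts a sequence `A → M → N → ⋯` of free left modules of finite rank that `Hom(-, A)`, and
therefore `Hom(-, X)` for every projective `X`, turns into an exact sequence. Shifting dimensions
along `0 → K → P → X → 0` with `P` projective, exactness of `Hom(-, X)` at the `i`-th place passes
from `K` to `X` at the next place. So if every left module has projective dimension at most `n`,
then `Hom(-, X)` is exact at the `n`-th place for all `X`. Taking for `X` the cokernel of the map
`u` arriving there gives `w` with `u ∘ w ∘ u = u`, whence the cokernel of `u*`, which is the `n`-th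
syzygy of the given cyclic module, is projective. Finally, by Baer's criterion and dimension
shifting, a bound for the projective dimension of cyclic modules holds for all modules.
-/

section HomExact

variable {R M N P : Type*} [Ring R] [AddCommGroup M] [Module R M] [AddCommGroup N] [Module R N]
  [AddCommGroup P] [Module R P]

/-- The sequence of abelian groups `Hom(P, X) → Hom(N, X) → Hom(M, X)` induced by `f : M → N` and
`g : N → P` is exact. -/
def HomExact (X : Type*) [AddCommGroup X] [Module R X] (f : M →ₗ[R] N) (g : N →ₗ[R] P) : Prop :=
  Function.Exact (fun φ : P →ₗ[R] X ↦ φ ∘ₗ g) (fun φ : N →ₗ[R] X ↦ φ ∘ₗ f)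

variable {X : Type*} [AddCommGroup X] [Module R X] {f : M →ₗ[R] N} {g : N →ₗ[R] P}

theorem homExact_iff_of_comp_eq_zero (hgf : g ∘ₗ f = 0) :
    HomExact X f g ↔ ∀ φ : N →ₗ[R] X, φ ∘ₗ f = 0 → ∃ ψ : P →ₗ[R] X, ψ ∘ₗ g = φ := by
  refine ⟨fun h φ hφ ↦ (h φ).1 hφ, fun h ↦ .of_comp_of_mem_range (funext fun ψ ↦ ?_) h⟩
  simp only [Function.comp_apply, Pi.zero_apply, LinearMap.comp_assoc, hgf, LinearMap.comp_zero]

theorem HomExact.comp_eq_zero (h : HomExact P f g) : g ∘ₗ f = 0 :=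
  h.apply_apply_eq_zero LinearMap.id

theorem exists_finset_support_subset_of_finite [Module.Finite R M] {ι : Type*}
    (f : M →ₗ[R] ι →₀ R) : ∃ T : Finset ι, ∀ x, (f x).support ⊆ T := by
  classical
  obtain ⟨S, hS⟩ := Module.Finite.fg_top (R := R) (M := M)
  let T := S.biUnion fun x ↦ (f x).support
  have hT : Submodule.span R S ≤ (Finsupp.supported R R (T : Set ι)).comap f :=
    Submodule.span_le.2 fun x hx ↦ Finset.coe_subset.2 <|
      Finset.subset_biUnion_of_mem (fun x ↦ (f x).support) hx
  exact ⟨T, fun x ↦ Finset.coe_subset.1 (hT (hS ▸ Submodule.mem_top))⟩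

theorem HomExact.of_projective [Module.Finite R N] [Module.Projective R X] (h : HomExact R f g) :
    HomExact X f g := by
  obtain ⟨s, hs⟩ := Module.projective_def'.1 ‹Module.Projective R X›
  let coord (a : X) : X →ₗ[R] R := Finsupp.lapply a ∘ₗ s
  refine .of_comp_of_mem_range (funext fun ψ ↦ ?_) fun φ hφ ↦ ?_
  · have hsψ : s ∘ₗ ψ ∘ₗ g ∘ₗ f = 0 := by
      ext x a
      exact LinearMap.congr_fun (h.apply_apply_eq_zero (coord a ∘ₗ ψ)) x
    calc (ψ ∘ₗ g) ∘ₗ f = (Finsupp.linearCombination R id ∘ₗ s) ∘ₗ ψ ∘ₗ g ∘ₗ f := by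
          rw [hs, LinearMap.id_comp, LinearMap.comp_assoc]
      _ = 0 := by rw [LinearMap.comp_assoc, hsψ, LinearMap.comp_zero]
  · have hcoord (a : X) : ∃ ψ : P →ₗ[R] R, ψ ∘ₗ g = coord a ∘ₗ φ :=
      (h _).1 (show coord a ∘ₗ (φ ∘ₗ f) = 0 by rw [show φ ∘ₗ f = 0 from hφ, LinearMap.comp_zero])
    choose ψ hψ using hcoord
    obtain ⟨T, hT⟩ := exists_finset_support_subset_of_finite (s ∘ₗ φ)
    refine ⟨∑ a ∈ T, (ψ a).smulRight a, LinearMap.ext fun x ↦ ?_⟩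
    calc (∑ a ∈ T, (ψ a).smulRight a) (g x) = ∑ a ∈ T, s (φ x) a • a := by
          simp only [LinearMap.sum_apply, LinearMap.smulRight_apply]
          exact Finset.sum_congr rfl fun a _ ↦ congrArg (· • a) (LinearMap.congr_fun (hψ a) x)
      _ = Finsupp.linearCombination R id (s (φ x)) :=
          (Finsupp.sum_of_support_subset (s (φ x)) (hT x) (fun a c ↦ c • a)
            fun a _ ↦ zero_smul R a).symm
      _ = φ x := LinearMap.congr_fun hs (φ x)

theorem HomExact.of_surjective {Q Y : Type*} [AddCommGroup Q] [Module R Q] [AddCommGroup Y]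
    [Module R Y] [Module.Projective R P] {h : P →ₗ[R] Q} (hgf : g ∘ₗ f = 0) (hhg : h ∘ₗ g = 0)
    {p : Y →ₗ[R] X} (hp : Function.Surjective p) (hker : HomExact p.ker f g)
    (hY : HomExact Y g h) : HomExact X g h := by
  refine (homExact_iff_of_comp_eq_zero hhg).2 fun φ hφ ↦ ?_
  obtain ⟨lift, rfl⟩ := Module.projective_lifting_property p φ hp
  let κ : N →ₗ[R] p.ker := (lift ∘ₗ g).codRestrict p.ker (LinearMap.congr_fun hφ)
  have hκ : κ ∘ₗ f = 0 := by
    ext x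
    exact (congrArg lift (LinearMap.congr_fun hgf x)).trans (map_zero lift)
  obtain ⟨ψ, hψ⟩ := (hker κ).1 hκ
  have hcorr : (lift - p.ker.subtype ∘ₗ ψ) ∘ₗ g = 0 := by
    rw [LinearMap.sub_comp, LinearMap.comp_assoc, show ψ ∘ₗ g = κ from hψ, sub_eq_zero]
    exact (LinearMap.subtype_comp_codRestrict ..).symm
  obtain ⟨χ, hχ⟩ := (hY _).1 hcorr
  refine ⟨p ∘ₗ χ, ?_⟩
  rw [LinearMap.comp_assoc, show χ ∘ₗ h = _ from hχ, LinearMap.comp_sub, ← LinearMap.comp_assoc,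
    LinearMap.comp_ker_subtype, LinearMap.zero_comp, sub_zero]

theorem HomExact.exists_comp_comp_eq [Module.Projective R N] [Module.Projective R P]
    (hgf : g ∘ₗ f = 0) (h : HomExact (N ⧸ f.range) f g) :
    ∃ w : N →ₗ[R] M, f ∘ₗ w ∘ₗ f = f := by
  obtain ⟨ψ, hψ⟩ := (h f.range.mkQ).1 f.range_mkQ_comp
  obtain ⟨lift, rfl⟩ := Module.projective_lifting_property _ ψ f.range.mkQ_surjective
  have hrange (y : N) : y - lift (g y) ∈ f.range :=
    (Submodule.Quotient.eq _).1 (LinearMap.congr_fun hψ y).symm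
  obtain ⟨w, hw⟩ := Module.projective_lifting_property f.rangeRestrict
    ((LinearMap.id - lift ∘ₗ g).codRestrict f.range hrange) f.surjective_rangeRestrict
  refine ⟨w, LinearMap.ext fun x ↦ ?_⟩
  calc f (w (f x)) = f x - lift (g (f x)) := congrArg Subtype.val (LinearMap.congr_fun hw (f x))
    _ = f x := by rw [← LinearMap.comp_apply g f, hgf, LinearMap.zero_apply, map_zero, sub_zero]

end HomExact

section Dual

variable {R S M N : Type*} [Ring R] [Ring S] [AddCommGroup M] [Module R M] [AddCommGroup N]
  [Module R N] [Module S N] [SMulCommClass R S N]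

theorem isNoetherian_linearMap_of_finite [Module.Finite R M] [IsNoetherian S N] :
    IsNoetherian S (M →ₗ[R] N) := by
  obtain ⟨n, p, hp⟩ := Module.Finite.exists_fin' R M
  have : IsNoetherian S ((Fin n → R) →ₗ[R] N) :=
    isNoetherian_of_linearEquiv ((Pi.basisFun R (Fin n)).constr S)
  exact isNoetherian_of_injective (p.lcomp S N) hp.injective_linearMapComp_right

theorem projective_linearMap_of_finite [Module.Finite R M] [Module.Projective R M]
    [Module.Projective S N] : Module.Projective S (M →ₗ[R] N) := by
  obtain ⟨n, p, hp⟩ := Module.Finite.exists_fin' R M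
  obtain ⟨s, hs⟩ := Module.projective_lifting_property p LinearMap.id hp
  have : Module.Projective S ((Fin n → R) →ₗ[R] N) :=
    .of_equiv ((DirectSum.linearEquivFunOnFintype S (Fin n) fun _ ↦ N).trans
      ((Pi.basisFun R (Fin n)).constr S))
  refine .of_split (p.lcomp S N) (s.lcomp S N) (LinearMap.ext fun φ ↦ ?_)
  rw [LinearMap.comp_apply, LinearMap.lcomp_apply', LinearMap.lcomp_apply', LinearMap.comp_assoc,
    hs, LinearMap.comp_id, LinearMap.id_apply]

theorem projective_quotient_range_lcomp [Module.Projective S (M →ₗ[R] N)] {L : Type*}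
    [AddCommGroup L] [Module R L] {f : M →ₗ[R] L} {w : L →ₗ[R] M} (hw : f ∘ₗ w ∘ₗ f = f) :
    Module.Projective S ((M →ₗ[R] N) ⧸ (f.lcomp S N).range) := by
  -- `e` is idempotent with kernel the range of `f.lcomp S N`, so it splits the quotient map.
  let e : (M →ₗ[R] N) →ₗ[S] (M →ₗ[R] N) := LinearMap.id - (w ∘ₗ f).lcomp S N
  have he : (f.lcomp S N).range ≤ e.ker := by
    rintro _ ⟨φ, rfl⟩
    change φ ∘ₗ f - φ ∘ₗ f ∘ₗ w ∘ₗ f = 0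
    rw [hw, sub_self]
  refine .of_split (Submodule.liftQ _ e he) (Submodule.mkQ _) (Submodule.linearMap_qext _ ?_)
  refine LinearMap.ext fun φ ↦ (Submodule.Quotient.eq _).2 ⟨-(φ ∘ₗ w), ?_⟩
  change -(φ ∘ₗ w) ∘ₗ f = φ - φ ∘ₗ w ∘ₗ f - φ
  rw [sub_sub_cancel_left]
  rfl

end Dual

section ProjectiveResolution

variable {C : Type*} [Category* C] [Abelian C]

/-- The projective resolution of `Z` given by a complex of projectives `K` and an augmentation
`ε : K.X 0 ⟶ Z` such that `⋯ ⟶ K.X 1 ⟶ K.X 0 ⟶ Z ⟶ 0` is exact. -/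
noncomputable def projectiveResolutionOfExact {Z : C} (K : ChainComplex C ℕ)
    (hK : ∀ n, Projective (K.X n)) (ε : K.X 0 ⟶ Z) (hε : Epi ε) (w : K.d 1 0 ≫ ε = 0)
    (exact₀ : (ShortComplex.mk _ _ w).Exact) (exact_succ : ∀ n, K.ExactAt (n + 1)) :
    ProjectiveResolution Z where
  complex := K
  projective := hK
  π := (ChainComplex.toSingle₀Equiv K Z).symm ⟨ε, w⟩
  quasiIso := ⟨fun n ↦ by
    cases n with
    | zero =>
      rw [ChainComplex.quasiIsoAt₀_iff, ShortComplex.quasiIso_iff_of_zeros']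
      · refine (ShortComplex.exact_and_epi_g_iff_of_iso ?_).2 ⟨exact₀, hε⟩
        exact ShortComplex.isoMk (Iso.refl _) (Iso.refl _) (Iso.refl _)
          ((Category.id_comp _).trans (Category.comp_id _).symm)
          ((Category.id_comp _).trans <|
            (ChainComplex.toSingle₀Equiv_symm_apply_f_zero ε w).symm.trans
              (Category.comp_id _).symm)
      · exact K.shape 0 0 (by simp)
      all_goals rfl
    | succ n =>
      exact (quasiIsoAt_iff_exactAt' _ _ (ChainComplex.exactAt_succ_single_obj _ _)).2
        (exact_succ n)⟩

theorem exactAt_augment_succ {K : ChainComplex C ℕ} {X Y : C} {ε : K.X 0 ⟶ X} {i : X ⟶ Y} [Mono i]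
    {w : K.d 1 0 ≫ ε = 0} (hw : K.d 1 0 ≫ ε ≫ i = 0) (exact₀ : (ShortComplex.mk _ _ w).Exact)
    (exact_succ : ∀ n, K.ExactAt (n + 1)) (n : ℕ) : (K.augment (ε ≫ i) hw).ExactAt (n + 1) := by
  cases n with
  | zero =>
    rw [HomologicalComplex.exactAt_iff' _ 2 1 0 (by simp) (by simp)]
    let α : ShortComplex.mk _ _ w ⟶ ShortComplex.mk (K.d 1 0) (ε ≫ i) hw :=
      { τ₁ := 𝟙 _, τ₂ := 𝟙 _, τ₃ := i }
    exact (ShortComplex.exact_iff_of_epi_of_isIso_of_mono α).1 exact₀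
  | succ n =>
    rw [HomologicalComplex.exactAt_iff' _ (n + 3) (n + 2) (n + 1) (by simp) (by simp)]
    exact (K.exactAt_iff' (n + 2) (n + 1) n (by simp) (by simp)).1 (exact_succ n)

theorem exact_epi_comp {S : ShortComplex C} (hS : S.Exact) {X : C} (p : X ⟶ S.X₁) [Epi p]
    (w : (p ≫ S.f) ≫ S.g = 0) : (ShortComplex.mk _ _ w).Exact := by
  let α : ShortComplex.mk _ _ w ⟶ S := { τ₁ := p, τ₂ := 𝟙 _, τ₃ := 𝟙 _ }
  exact (ShortComplex.exact_iff_of_epi_of_isIso_of_mono α).2 hS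

/-- The projective resolution of `S.X₃` obtained by splicing a projective resolution of `S.X₁` with
a short exact sequence `S` whose middle term is projective. -/
noncomputable def projectiveResolutionSplice {S : ShortComplex C} (hS : S.ShortExact)
    [Projective S.X₂] (P : ProjectiveResolution S.X₁) : ProjectiveResolution S.X₃ :=
  let ε : P.complex.X 0 ⟶ S.X₁ := P.π.f 0
  have w : P.complex.d 1 0 ≫ ε = 0 := P.complex_d_comp_π_f_zero
  have : Epi ε := inferInstanceAs (Epi (P.π.f 0))
  have := hS.mono_f
  have hε : P.complex.d 1 0 ≫ ε ≫ S.f = 0 := by rw [← Category.assoc, w, Limits.zero_comp]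
  have hg : (ε ≫ S.f) ≫ S.g = 0 := by rw [Category.assoc, S.zero, Limits.comp_zero]
  projectiveResolutionOfExact (P.complex.augment (ε ≫ S.f) hε)
    (fun | 0 => ‹Projective S.X₂› | n + 1 => P.projective n) S.g hS.epi_g hg
    (exact_epi_comp hS.exact ε hg) (exactAt_augment_succ hε P.exact₀ P.complex_exactAt_succ)

end ProjectiveResolution

namespace HasProjDimLE

variable {A : Type u} [Ring A] {M : ModuleCat.{u} A} {n : ℕ}

theorem hasProjectiveDimensionLE (h : HasProjDimLE A M n) : HasProjectiveDimensionLE M n := by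
  obtain ⟨P, hP⟩ := h
  refine (hasProjectiveDimensionLT_iff _ _).2 fun i hi Y e ↦ ?_
  obtain ⟨f, _, rfl⟩ := P.extMk_surjective e (i + 1) rfl
  obtain rfl : f = 0 := (hP i hi).eq_of_src _ _
  exact P.extMk_zero _ _

theorem of_hasProjectiveDimensionLE (h : HasProjectiveDimensionLE M n) : HasProjDimLE A M n := by
  induction n generalizing M with
  | zero =>
    have : Projective M := (projective_iff_hasProjectiveDimensionLE_zero M).2 h
    exact ⟨.self M, fun i hi ↦ HomologicalComplex.isZero_single_obj_X _ _ _ _ hi.ne'⟩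
  | succ n ih =>
    have hS := M.shortExact_projectiveShortComplex
    obtain ⟨P, hP⟩ := ih ((hS.hasProjectiveDimensionLT_X₃_iff n inferInstance).1 h)
    refine ⟨projectiveResolutionSplice hS P, fun i hi ↦ ?_⟩
    obtain ⟨i, rfl⟩ := Nat.exists_eq_succ_of_ne_zero (Nat.ne_zero_of_lt hi)
    exact hP i (Nat.lt_of_succ_lt_succ hi)

end HasProjDimLE

section CyclicModules

variable {R : Type u} [Ring R]

theorem injective_of_subsingleton_ext_quotient {N : ModuleCat.{u} R}
    (h : ∀ I : Ideal R, Subsingleton (Abelian.Ext (ModuleCat.of R (R ⧸ I)) N 1)) : Injective N := by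
  rw [← Module.injective_iff_injective_object R N, ← Module.Baer.iff_injective]
  intro I φ
  have hI := LinearMap.exact_subtype_mkQ I
  let S : ShortComplex (ModuleCat.{u} R) :=
    ModuleCat.shortComplexOfCompEqZero I.subtype I.mkQ hI.linearMap_comp_eq_zero
  have hS : S.ShortExact :=
    ModuleCat.shortComplex_shortExact S hI I.injective_subtype I.mkQ_surjective
  obtain ⟨e, he⟩ := Abelian.Ext.contravariant_sequence_exact₁ hS N
    (Abelian.Ext.mk₀ (ModuleCat.ofHom φ)) (n₁ := 1) rfl ((h I).elim _ _)
  obtain ⟨ψ, rfl⟩ := Abelian.Ext.addEquiv₀.symm.surjective e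
  rw [Abelian.Ext.addEquiv₀_symm_apply, Abelian.Ext.mk₀_comp_mk₀] at he
  have hψ : S.f ≫ ψ = ModuleCat.ofHom φ := Abelian.Ext.addEquiv₀.symm.injective he
  exact ⟨ψ.hom, fun x hx ↦ congrArg (fun χ : S.X₁ ⟶ N ↦ χ.hom ⟨x, hx⟩) hψ⟩

theorem hasInjectiveDimensionLE_of_subsingleton_ext_quotient {N : ModuleCat.{u} R} {n : ℕ}
    (h : ∀ I : Ideal R, Subsingleton (Abelian.Ext (ModuleCat.of R (R ⧸ I)) N (n + 1))) :
    HasInjectiveDimensionLE N n := by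
  induction n generalizing N with
  | zero =>
    exact injective_iff_hasInjectiveDimensionLT_one.1 (injective_of_subsingleton_ext_quotient h)
  | succ n ih =>
    let S : ShortComplex (ModuleCat.{u} R) := .mk _ _ (Limits.cokernel.condition (Injective.ι N))
    have hS : S.ShortExact :=
      { exact := ShortComplex.exact_of_g_is_cokernel _ (Limits.cokernelIsCokernel _) }
    refine (hS.hasInjectiveDimensionLT_X₃_iff n inferInstance).1 (ih fun I ↦ ?_)
    refine subsingleton_of_forall_eq 0 fun e ↦ ?_
    obtain ⟨e', rfl⟩ := Abelian.Ext.covariant_sequence_exact₃ _ hS e rfl ((h I).elim _ _)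
    rw [e'.eq_zero_of_injective, Abelian.Ext.zero_comp]

theorem hasProjectiveDimensionLE_of_quotient {n : ℕ}
    (h : ∀ I : Ideal R, HasProjectiveDimensionLE (ModuleCat.of R (R ⧸ I)) n) (M : ModuleCat.{u} R) :
    HasProjectiveDimensionLE M n := by
  refine (hasProjectiveDimensionLT_iff _ _).2 fun i hi Y e ↦ ?_
  have : HasInjectiveDimensionLE Y n := hasInjectiveDimensionLE_of_subsingleton_ext_quotient
    fun I ↦ (h I).subsingleton _ _ _ le_rfl _
  exact e.eq_zero_of_hasInjectiveDimensionLT _ hi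

end CyclicModules

section OppositeRing

variable {A : Type*} [Ring A]

instance : Module.Free Aᵐᵒᵖ A :=
  .of_equiv (MulOpposite.opLinearEquiv Aᵐᵒᵖ : A ≃ₗ[Aᵐᵒᵖ] Aᵐᵒᵖ).symm

instance [IsNoetherianRing Aᵐᵒᵖ] : IsNoetherian Aᵐᵒᵖ A :=
  isNoetherian_of_linearEquiv (MulOpposite.opLinearEquiv Aᵐᵒᵖ : A ≃ₗ[Aᵐᵒᵖ] Aᵐᵒᵖ).symm

variable {L M : Type*} [AddCommGroup L] [Module A L] [AddCommGroup M] [Module A M]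

theorem exists_range_lcomp_eq {K : Submodule Aᵐᵒᵖ (L →ₗ[A] A)} (hK : K.FG) :
    ∃ (n : ℕ) (g : L →ₗ[A] Fin n → A), (g.lcomp Aᵐᵒᵖ A).range = K := by
  obtain ⟨n, s, rfl⟩ := Submodule.fg_iff_exists_fin_generating_family.1 hK
  have hcomp (φ : (Fin n → A) →ₗ[A] A) :
      φ ∘ₗ LinearMap.pi s = ∑ i, MulOpposite.op (φ fun j ↦ if i = j then 1 else 0) • s i := by
    ext x
    rw [LinearMap.comp_apply, LinearMap.pi_apply_eq_sum_univ φ]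
    exact (LinearMap.sum_apply Finset.univ
      (fun i ↦ MulOpposite.op (φ fun j ↦ if i = j then 1 else 0) • s i) x).symm
  refine ⟨n, LinearMap.pi s, le_antisymm ?_ (Submodule.span_le.2 ?_)⟩
  · rintro _ ⟨φ, rfl⟩
    rw [LinearMap.lcomp_apply', hcomp]
    exact Submodule.sum_smul_mem _ _ fun i _ ↦ Submodule.subset_span ⟨i, rfl⟩
  · rintro _ ⟨i, rfl⟩
    exact ⟨LinearMap.proj i, LinearMap.proj_pi s i⟩

theorem exists_homExact [IsNoetherianRing Aᵐᵒᵖ] [Module.Finite A M] (f : L →ₗ[A] M) :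
    ∃ (n : ℕ) (g : M →ₗ[A] Fin n → A), HomExact A f g := by
  have : IsNoetherian Aᵐᵒᵖ (M →ₗ[A] A) := isNoetherian_linearMap_of_finite
  obtain ⟨n, g, hg⟩ := exists_range_lcomp_eq (IsNoetherian.noetherian (f.lcomp Aᵐᵒᵖ A).ker)
  exact ⟨n, g, LinearMap.exact_iff.2 hg.symm⟩

end OppositeRing

section ProjectiveDimension

variable {A : Type u} [Ring A]

theorem hasProjectiveDimensionLE_zero_of_projective (X : Type u) [AddCommGroup X] [Module A X]
    [Module.Projective A X] : HasProjectiveDimensionLE (ModuleCat.of A X) 0 :=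
  (projective_iff_hasProjectiveDimensionLE_zero _).1 ((IsProjective.iff_projective X).1 ‹_›)

theorem hasProjectiveDimensionLE_succ_of_ker {P M : Type u} [AddCommGroup P] [Module A P]
    [AddCommGroup M] [Module A M] [Module.Projective A P] {p : P →ₗ[A] M}
    (hp : Function.Surjective p) {n : ℕ}
    (h : HasProjectiveDimensionLE (ModuleCat.of A p.ker) n) :
    HasProjectiveDimensionLE (ModuleCat.of A M) (n + 1) := by
  have : Projective (ModuleCat.of A P) := (IsProjective.iff_projective P).1 inferInstance
  exact ((LinearMap.shortExact_shortComplexKer hp).hasProjectiveDimensionLT_X₃_iff n this).2 h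

theorem HomExact.of_hasProjectiveDimensionLE_succ {M N P Q : Type*} [AddCommGroup M] [Module A M]
    [AddCommGroup N] [Module A N] [AddCommGroup P] [Module A P] [AddCommGroup Q] [Module A Q]
    [Module.Projective A P] [Module.Finite A P] {f : M →ₗ[A] N} {g : N →ₗ[A] P} {h : P →ₗ[A] Q}
    (hgf : g ∘ₗ f = 0) (hhg : h ∘ₗ g = 0) {d : ℕ}
    (hfg : ∀ X : ModuleCat.{u} A, HasProjectiveDimensionLE X d → HomExact X f g)
    (hgh : HomExact A g h) (X : ModuleCat.{u} A) (hX : HasProjectiveDimensionLE X (d + 1)) :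
    HomExact X g h := by
  have hS := X.shortExact_projectiveShortComplex
  exact .of_surjective hgf hhg hS.moduleCat_surjective_g
    (hfg _ ((hS.hasProjectiveDimensionLT_X₃_iff d inferInstance).1 hX)) hgh.of_projective

theorem hasProjectiveDimensionLE_quotient_range_lcomp [IsNoetherianRing Aᵐᵒᵖ] {d k : ℕ}
    (hA : ∀ X : ModuleCat.{u} A, HasProjectiveDimensionLE X (d + k)) {L M N : Type u}
    [AddCommGroup L] [Module A L] [Module.Finite A L] [Module.Projective A L]
    [AddCommGroup M] [Module A M] [Module.Finite A M] [Module.Projective A M]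
    [AddCommGroup N] [Module A N] [Module.Finite A N] [Module.Projective A N]
    {f : L →ₗ[A] M} {g : M →ₗ[A] N}
    (hfg : ∀ X : ModuleCat.{u} A, HasProjectiveDimensionLE X d → HomExact X f g) :
    HasProjectiveDimensionLE
      (ModuleCat.of Aᵐᵒᵖ ((L →ₗ[A] A) ⧸ (f.lcomp Aᵐᵒᵖ A).range)) k := by
  have hfg_projective (X : Type u) [AddCommGroup X] [Module A X] [Module.Projective A X] :
      HomExact X f g :=
    have := hasProjectiveDimensionLE_zero_of_projective (A := A) X
    hfg (ModuleCat.of A X) (hasProjectiveDimensionLT_of_ge _ 1 _ (Nat.le_add_left 1 d))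
  have hgf : g ∘ₗ f = 0 := (hfg_projective N).comp_eq_zero
  have : Module.Projective Aᵐᵒᵖ (L →ₗ[A] A) := projective_linearMap_of_finite
  induction k generalizing d L M N with
  | zero =>
    obtain ⟨w, hw⟩ := HomExact.exists_comp_comp_eq hgf (hfg (ModuleCat.of A (M ⧸ f.range)) (hA _))
    have := projective_quotient_range_lcomp (S := Aᵐᵒᵖ) (N := A) hw
    exact hasProjectiveDimensionLE_zero_of_projective _
  | succ k ih =>
    obtain ⟨n, h, hgh⟩ := exists_homExact g
    have hhg : h ∘ₗ g = 0 := hgh.of_projective.comp_eq_zero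
    have hcoker : HasProjectiveDimensionLE
        (ModuleCat.of Aᵐᵒᵖ ((M →ₗ[A] A) ⧸ (g.lcomp Aᵐᵒᵖ A).range)) k :=
      ih (d := d + 1) (by rwa [Nat.add_right_comm])
        (HomExact.of_hasProjectiveDimensionLE_succ hgf hhg hfg hgh)
        (fun _ _ _ _ ↦ hgh.of_projective) hhg projective_linearMap_of_finite
    refine hasProjectiveDimensionLE_succ_of_ker (f.lcomp Aᵐᵒᵖ A).range.mkQ_surjective ?_
    have hker : (f.lcomp Aᵐᵒᵖ A).ker = (g.lcomp Aᵐᵒᵖ A).range :=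
      Function.Exact.linearMap_ker_eq (hfg_projective A)
    let e : ((M →ₗ[A] A) ⧸ (g.lcomp Aᵐᵒᵖ A).range) ≃ₗ[Aᵐᵒᵖ] (f.lcomp Aᵐᵒᵖ A).range.mkQ.ker :=
      (Submodule.quotEquivOfEq _ _ hker.symm).trans <|
        (f.lcomp Aᵐᵒᵖ A).quotKerEquivRange.trans (.ofEq _ _ (Submodule.ker_mkQ _).symm)
    exact ModuleCat.hasProjectiveDimensionLE_of_linearEquiv (M := .of Aᵐᵒᵖ _) e k

end ProjectiveDimension

section OppositeDimension

variable {A : Type u} [Ring A] [IsNoetherianRing Aᵐᵒᵖ] {n : ℕ}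

theorem hasProjectiveDimensionLE_quotient_op
    (hA : ∀ X : ModuleCat.{u} A, HasProjectiveDimensionLE X n) (I : Ideal Aᵐᵒᵖ) :
    HasProjectiveDimensionLE (ModuleCat.of Aᵐᵒᵖ (Aᵐᵒᵖ ⧸ I)) n := by
  let e : (A →ₗ[A] A) ≃ₗ[Aᵐᵒᵖ] Aᵐᵒᵖ :=
    (LinearMap.ringLmapEquivSelf A Aᵐᵒᵖ A).trans (MulOpposite.opLinearEquiv Aᵐᵒᵖ)
  obtain ⟨_, f, hf⟩ := exists_range_lcomp_eq
    ((IsNoetherian.noetherian I).map e.symm.toLinearMap)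
  obtain ⟨_, g, hfg⟩ := exists_homExact f
  have hcoker := hasProjectiveDimensionLE_quotient_range_lcomp (d := 0) (f := f) (g := g)
    (by rwa [Nat.zero_add]) fun X hX ↦ by
      have : Module.Projective A X :=
        (IsProjective.iff_projective X).2 ((projective_iff_hasProjectiveDimensionLE_zero X).2 hX)
      exact hfg.of_projective
  rw [hf] at hcoker
  exact ModuleCat.hasProjectiveDimensionLE_of_linearEquiv (M := .of Aᵐᵒᵖ _)
    (Submodule.Quotient.equiv I _ e.symm rfl).symm n

theorem finiteGlobalDim_op_of_noetherian_general
    (h : ∀ M : ModuleCat.{u} A, HasProjDimLE A M n) (M : ModuleCat.{u} Aᵐᵒᵖ) :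
    HasProjDimLE Aᵐᵒᵖ M n :=
  .of_hasProjectiveDimensionLE <| hasProjectiveDimensionLE_of_quotient
    (hasProjectiveDimensionLE_quotient_op fun X ↦ (h X).hasProjectiveDimensionLE) M

end OppositeDimension

/-- If a ring `A` is left and right Noetherian and has finite left global dimension,
then its opposite ring has finite left global dimension as well (equivalently, `A` has
finite right global dimension). -/
theorem finiteGlobalDim_op_of_noetherian
    (A : Type u) [Ring A] [IsNoetherianRing A] [IsNoetherianRing Aᵐᵒᵖ]
    (h : HasFiniteGlobalDim A) :
    HasFiniteGlobalDim Aᵐᵒᵖ :=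
  h.imp fun _ ↦ finiteGlobalDim_op_of_noetherian_general
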